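/- (Kostant–Rowen theorem) Let n ≥ 2. For any 2n−2 complex alternating n×n matrices A_1, …, A_{2n−2} (i.e. A_iᵀ = −A_i for each i), the alternating sum Σ_{σ ∈ S_{2n−2}} sgn(σ) · A_{σ(1)} A_{σ(2)} ⋯ A_{σ(2n−2)} equals the zero matrix, where the product is the ordered matrix product. -/

import Mathlib

/-!
Encode the matrices `A s` as the single matrix `a = ∑ s, A s ⊗ v s` over an exterior algebra: its
power `a ^ N` is the standard polynomial of the `A s` times `v 0 ∧ ⋯ ∧ v (N - 1)`, so the theorem
says that `a ^ (2 * n - 2) = 0`.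

Let `n` be even. Then `B = a ^ 2` has entries in the commutative centre, is skew-symmetric, and all
traces `trace (B ^ k)` with `0 < k` vanish because `a` is odd. Hence `charpoly B = X ^ n` and
`B ^ (n - 1) = adjugate (-B)`. The entries of the adjugate are, up to factorials, the coefficients
of `ω ^ (n - 1)` for a polarization `ω` of the two-form of `B`; they are killed by `c = u ∧ v`,
because the Pfaffian of `B` is. For the latter, apply the invariance of top degree forms to the
orthogonal matrix `1 - 2 t` with `t = v a`, which fixes the two-form of `B` and moves the two-form
of `u a` by a multiple of `c B`.

Let `n` be odd. Linearizing the identity for `n + 1` in one variable with values in the last row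
and column gives the identity of degree `2 * n - 1` for `n`; linearizing this one and taking a
partial trace lowers the degree to `2 * n - 2`.

Since the identity has integer coefficients, it passes from `ℚ`-algebras to all commutative rings
through generic matrices.
-/

open Matrix

section CharacteristicPolynomial

open Polynomial

variable {R n : Type*} [CommRing R] [Fintype n] [DecidableEq n]

theorem trace_adjugate_charmatrix (B : Matrix n n R) :
    trace (adjugate (charmatrix B)) = derivative B.charpoly := by
  have hdiag (i : n) : adjugate (charmatrix B) i i =
      ∑ σ : Equiv.Perm n, (Equiv.Perm.sign σ : ℤ) •
        ((∏ j ∈ Finset.univ.erase i, charmatrix B j (σ j)) *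
          derivative (charmatrix B i (σ i))) := by
    rw [adjugate_apply, ← det_transpose, ← updateCol_transpose, det_apply]
    refine Finset.sum_congr rfl fun σ _ => ?_
    rw [← Finset.prod_erase_mul _ _ (Finset.mem_univ i), Units.smul_def]
    congr 2
    · refine Finset.prod_congr rfl fun j hj => ?_
      rw [updateCol_ne (Finset.ne_of_mem_erase hj), transpose_apply]
    · rw [updateCol_self, charmatrix_apply, diagonal_apply]
      by_cases hσ : i = σ i
      · simp [← hσ]
      · simp [hσ, Ne.symm hσ]
  rw [charpoly, ← det_transpose]
  simp only [trace, diag_apply, hdiag, det_apply, transpose_apply, derivative_sum, Units.smul_def,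
    derivative_smul]
  rw [Finset.sum_comm]
  refine Finset.sum_congr rfl fun σ _ => ?_
  rw [← Finset.smul_sum, derivative_prod_finset]

theorem X_smul_adjugate_charmatrix (B : Matrix n n R) :
    (X : R[X]) • adjugate (charmatrix B) =
      B.map C * adjugate (charmatrix B) + B.charpoly • (1 : Matrix n n R[X]) := by
  have hX : (X : R[X]) • (1 : Matrix n n R[X]) = B.map C + charmatrix B := by
    rw [charmatrix, smul_one_eq_diagonal, RingHom.mapMatrix_apply, add_sub_cancel, scalar_apply]
  rw [← one_mul (adjugate (charmatrix B)), ← smul_mul_assoc, hX, add_mul, one_mul, mul_adjugate,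
    charpoly]

omit [DecidableEq n] in
theorem exists_forall_natDegree_trace_map_C_mul_le (Q : Matrix n n R[X]) :
    ∃ d, ∀ N : Matrix n n R, (trace (N.map C * Q)).natDegree ≤ d := by
  refine ⟨Finset.univ.sup fun i => Finset.univ.sup fun j => (Q i j).natDegree, fun N => ?_⟩
  simp only [trace, diag_apply, mul_apply, map_apply]
  refine natDegree_sum_le_of_forall_le _ _ fun i _ =>
    natDegree_sum_le_of_forall_le _ _ fun j _ => (natDegree_C_mul_le _ _).trans ?_
  exact (Finset.le_sup (f := fun i => (Q j i).natDegree) (Finset.mem_univ i)).trans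
    (Finset.le_sup (f := fun j => Finset.univ.sup fun i => (Q j i).natDegree) (Finset.mem_univ j))

theorem trace_map_C_mul_adjugate_charmatrix_eq_zero {B : Matrix n n R}
    (hB : ∀ k, 0 < k → trace (B ^ k) = 0) :
    trace (B.map C * adjugate (charmatrix B)) = 0 := by
  set P := adjugate (charmatrix B)
  have hpow (k : ℕ) : X ^ k * trace (B.map C * P) = trace ((B ^ (k + 1)).map C * P) := by
    induction k with
    | zero => simp
    | succ k ih =>
      have hmap (j : ℕ) : (B ^ (j + 1)).map (C : R →+* R[X]) = (B ^ j).map C * B.map C := by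
        rw [pow_succ, Matrix.map_mul]
      have htrace : trace ((B ^ (k + 1)).map (C : R →+* R[X])) = 0 := by
        rw [← C.map_zero, ← hB (k + 1) k.succ_pos]
        exact (AddMonoidHom.map_trace (C : R →+* R[X]) _).symm
      rw [pow_succ', mul_assoc, ih, ← smul_eq_mul, ← trace_smul, ← Matrix.mul_smul,
        X_smul_adjugate_charmatrix, mul_add, ← mul_assoc, ← hmap, trace_add, Matrix.mul_smul,
        mul_one, trace_smul, htrace, smul_zero, add_zero]
  -- Multiplying by powers of `X` only changes the power of `B`, so it does not raise the degree.
  obtain ⟨d, hd⟩ := exists_forall_natDegree_trace_map_C_mul_le P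
  ext k
  rw [← coeff_X_pow_mul _ (d + 1) k, hpow, coeff_zero]
  exact coeff_eq_zero_of_natDegree_lt (by have := hd (B ^ (d + 1 + 1)); omega)

theorem charpoly_eq_X_pow_of_trace_pow_eq_zero [IsAddTorsionFree R] {B : Matrix n n R}
    (hB : ∀ k, 0 < k → trace (B ^ k) = 0) : B.charpoly = X ^ Fintype.card n := by
  nontriviality R
  have hode : X * derivative B.charpoly = Fintype.card n • B.charpoly := by
    rw [← trace_adjugate_charmatrix, ← smul_eq_mul, ← trace_smul, X_smul_adjugate_charmatrix,
      trace_add, trace_map_C_mul_adjugate_charmatrix_eq_zero hB, zero_add, trace_smul, trace_one,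
      smul_eq_mul, nsmul_eq_mul, mul_comm]
  ext k
  rw [coeff_X_pow]
  split_ifs with hk
  · rw [hk, ← charpoly_natDegree_eq_dim B]
    exact B.charpoly_monic.coeff_natDegree
  · have hcoeff : k • B.charpoly.coeff k = Fintype.card n • B.charpoly.coeff k := by
      rw [← Polynomial.coeff_smul (Fintype.card n), ← hode]
      cases k with
      | zero => simp
      | succ k => simp [coeff_derivative, mul_comm]
    have hsub : ((k : ℤ) - Fintype.card n) • B.charpoly.coeff k = 0 := by
      rw [sub_smul, natCast_zsmul, natCast_zsmul, hcoeff, sub_self]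
    exact (IsAddTorsionFree.zsmul_eq_zero_iff_right (by omega)).mp hsub

theorem adjugate_neg_eq_pow_of_charpoly_eq_X_pow {B : Matrix n n R}
    (hB : B.charpoly = X ^ Fintype.card n) : adjugate (-B) = B ^ (Fintype.card n - 1) := by
  set P : (Matrix n n R)[X] := matPolyEquiv (adjugate (charmatrix B)) with hP
  have hPmul : P * (X - C B) = X ^ Fintype.card n := by
    rw [hP, ← matPolyEquiv_charmatrix, ← map_mul, adjugate_mul, ← charpoly, hB,
      matPolyEquiv_smul_one, Polynomial.map_pow, map_X]
  have hgeom : P = ∑ i ∈ Finset.range (Fintype.card n), X ^ i * C B ^ (Fintype.card n - 1 - i) := by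
    refine (monic_X_sub_C B).isRegular.right ?_
    have hBpow : B ^ Fintype.card n = 0 := by simpa [hB] using aeval_self_charpoly B
    change _ * _ = _ * _
    rw [(commute_X (C B)).geom_sum₂_mul, hPmul, ← C_pow, hBpow, C_0, sub_zero]
  have hPcoeff : P.coeff 0 = adjugate (-B) := by
    have hneg : (charmatrix B).map (evalRingHom 0) = -B := by
      ext i j
      by_cases hij : i = j <;> simp [hij]
    have h := RingHom.map_adjugate (evalRingHom (0 : R)) (charmatrix B)
    rw [RingHom.mapMatrix_apply, RingHom.mapMatrix_apply, hneg] at h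
    ext i j
    rw [← h, hP, matPolyEquiv_coeff_apply, coeff_zero_eq_eval_zero, map_apply, coe_evalRingHom]
  rw [← hPcoeff, hgeom, finsetSum_coeff]
  cases hn : Fintype.card n with
  | zero =>
    have := Fintype.card_eq_zero_iff.mp hn
    exact Subsingleton.elim _ _
  | succ m =>
    rw [Finset.sum_range_succ', Finset.sum_eq_zero fun i _ => by simp [pow_succ', mul_assoc]]
    simp [coeff_C_zero, ← C_pow, -map_pow]

end CharacteristicPolynomial

section Parity

open CliffordAlgebra (evenOdd)

/-- The even (`p = 0`) or odd (`p = 1`) part of an exterior algebra. -/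
abbrev parityPart (R M : Type*) [CommRing R] [AddCommGroup M] [Module R M] (p : ZMod 2) :
    Submodule R (ExteriorAlgebra R M) :=
  evenOdd (0 : QuadraticForm R M) p

variable {R M : Type*} [CommRing R] [AddCommGroup M] [Module R M] {x y : ExteriorAlgebra R M}

theorem ι_mem_parityPart_one (v : M) : ExteriorAlgebra.ι R v ∈ parityPart R M 1 :=
  CliffordAlgebra.ι_mem_evenOdd_one _ v

theorem mul_eq_smul_mul_of_mem_parityPart {p q : ZMod 2} (hx : x ∈ parityPart R M p)
    (hy : y ∈ parityPart R M q) : x * y = (-1 : ℤˣ) ^ (q * p) • (y * x) := by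
  have h := CliffordAlgebra.map_mul_map_of_isOrtho_of_mem_evenOdd
    (QuadraticMap.Isometry.id (0 : QuadraticForm R M)) (QuadraticMap.Isometry.id 0)
    (fun v w => by simp [QuadraticMap.IsOrtho]) x y hx hy
  simpa only [CliffordAlgebra.map_id, AlgHom.id_apply] using h

theorem mul_eq_neg_mul_of_odd (hx : x ∈ parityPart R M 1) (hy : y ∈ parityPart R M 1) :
    x * y = -(y * x) := by
  simpa using mul_eq_smul_mul_of_mem_parityPart hx hy

theorem mem_center_of_even (hx : x ∈ parityPart R M 0) :
    x ∈ Subalgebra.center R (ExteriorAlgebra R M) := by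
  refine Subalgebra.mem_center_iff.mpr fun y => ?_
  obtain ⟨y₀, hy₀, y₁, hy₁, rfl⟩ := Submodule.mem_sup.mp
    ((CliffordAlgebra.evenOdd_isCompl (0 : QuadraticForm R M)).sup_eq_top ▸
      Submodule.mem_top (x := y))
  rw [add_mul, mul_add, mul_eq_smul_mul_of_mem_parityPart hy₀ hx,
    mul_eq_smul_mul_of_mem_parityPart hy₁ hx]
  simp

theorem mul_mem_center_of_odd (hx : x ∈ parityPart R M 1) (hy : y ∈ parityPart R M 1) :
    x * y ∈ Subalgebra.center R (ExteriorAlgebra R M) :=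
  mem_center_of_even (CliffordAlgebra.evenOdd_mul_le _ 1 1 (Submodule.mul_mem_mul hx hy))

end Parity

section TopDegree

variable {R M N ι : Type*} [CommRing R] [AddCommGroup M] [Module R M] [AddCommGroup N] [Module R N]

theorem alternatingMap_eq_basis_det_smul [Fintype ι] [DecidableEq ι] (b : Module.Basis ι R M)
    (f : M [⋀^ι]→ₗ[R] N) (v : ι → M) : f v = b.det v • f b := by
  suffices h : f = (LinearMap.toSpanSingleton R N (f b)).compAlternatingMap b.det from
    congrArg (· v) h
  refine b.ext_alternating fun σ hσ => ?_
  obtain ⟨σ, rfl⟩ : ∃ τ : Equiv.Perm ι, σ = τ :=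
    ⟨.ofBijective σ (Finite.injective_iff_bijective.mp hσ), rfl⟩
  change f (b ∘ σ) = b.det (b ∘ σ) • f b
  rw [f.map_perm, b.det.map_perm, b.det_self, Units.smul_def, Units.smul_def, smul_assoc, one_smul]

theorem exteriorAlgebra_map_eq_det_smul {n : ℕ} (b : Module.Basis (Fin n) R M) (T : M →ₗ[R] M)
    {x : ExteriorAlgebra R M} (hx : x ∈ ⋀[R]^n M) :
    ExteriorAlgebra.map T x = LinearMap.det T • x := by
  rw [← ExteriorAlgebra.ιMulti_span_fixedDegree] at hx
  induction hx using Submodule.span_induction with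
  | mem x hx =>
    obtain ⟨v, rfl⟩ := hx
    rw [ExteriorAlgebra.map_apply_ιMulti, alternatingMap_eq_basis_det_smul b, b.det_comp, mul_smul,
      ← alternatingMap_eq_basis_det_smul b]
  | zero => simp
  | add x y _ _ hx hy => rw [map_add, hx, hy, smul_add]
  | smul c x _ hx => rw [map_smul, hx, smul_comm]

theorem smul_ιMulti_basis_eq_zero_iff {n : ℕ} (b : Module.Basis (Fin n) R M) {c : R} :
    c • ExteriorAlgebra.ιMulti R n b = 0 ↔ c = 0 := by
  refine ⟨fun h => ?_, fun h => by rw [h, zero_smul]⟩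
  have hdet := congrArg (ExteriorAlgebra.liftAlternating (Pi.single n b.det)) h
  simpa [ExteriorAlgebra.liftAlternating_apply_ιMulti, b.det_self] using hdet

end TopDegree

section TwoForm

open ExteriorAlgebra

variable {R κ M N : Type*} [CommRing R] [Fintype κ] [AddCommGroup M] [Module R M]
  [AddCommGroup N] [Module R N]

/-- The element `∑ i j, X i j • (v i ∧ v j)` of the exterior algebra: the two-form with matrix `X`
in the vectors `v`. -/
def twoForm (v : κ → M) : Matrix κ κ R →ₗ[R] ExteriorAlgebra R M where
  toFun X := ∑ i, ∑ j, X i j • (ι R (v i) * ι R (v j))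
  map_add' X Y := by simp only [Matrix.add_apply, add_smul, Finset.sum_add_distrib]
  map_smul' c X := by simp only [Matrix.smul_apply, smul_assoc, Finset.smul_sum, RingHom.id_apply]

theorem twoForm_apply (v : κ → M) (X : Matrix κ κ R) :
    twoForm v X = ∑ i, ∑ j, X i j • (ι R (v i) * ι R (v j)) := rfl

theorem twoForm_mem_exteriorPower (v : κ → M) (X : Matrix κ κ R) : twoForm v X ∈ ⋀[R]^2 M := by
  refine Submodule.sum_mem _ fun i _ => Submodule.sum_mem _ fun j _ => Submodule.smul_mem _ _ ?_
  rw [exteriorPower, pow_two]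
  exact Submodule.mul_mem_mul (LinearMap.mem_range_self _ _) (LinearMap.mem_range_self _ _)

theorem twoForm_mem_parityPart_zero (v : κ → M) (X : Matrix κ κ R) :
    twoForm v X ∈ parityPart R M 0 :=
  Submodule.sum_mem _ fun _ _ => Submodule.sum_mem _ fun _ _ =>
    Submodule.smul_mem _ _ (CliffordAlgebra.ι_mul_ι_mem_evenOdd_zero _ _ _)

theorem map_twoForm (f : M →ₗ[R] N) (v : κ → M) (X : Matrix κ κ R) :
    ExteriorAlgebra.map f (twoForm v X) = twoForm (f ∘ v) X := by
  simp only [twoForm_apply, map_sum, map_smul, map_mul, map_apply_ι, Function.comp_apply]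

theorem twoForm_linearCombination (v : κ → M) (T X : Matrix κ κ R) :
    twoForm (fun j => ∑ i, T i j • v i) X = twoForm v (T * X * Tᵀ) := by
  simp only [twoForm_apply, map_sum, map_smul, mul_apply, Finset.sum_mul, Finset.mul_sum,
    Finset.smul_sum, Finset.sum_smul, transpose_apply]
  rw [Finset.sum_comm_cycle]
  refine Eq.trans (Finset.sum_congr rfl fun j _ => ?_) Finset.sum_comm
  rw [Finset.sum_comm_cycle]
  refine Finset.sum_congr rfl fun i _ => Eq.trans Finset.sum_comm ?_
  refine Finset.sum_congr rfl fun b _ => Finset.sum_congr rfl fun a _ => ?_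
  rw [smul_mul_smul_comm, smul_smul, mul_right_comm, mul_comm (X a b), mul_right_comm]

theorem map_toLin'_twoForm_single [DecidableEq κ] (T X : Matrix κ κ R) :
    ExteriorAlgebra.map (toLin' T) (twoForm (Pi.single · 1) X) =
      twoForm (Pi.single · 1) (T * X * Tᵀ) := by
  have hT : toLin' T ∘ (Pi.single · 1) =
      fun j : κ => ∑ i, T i j • Pi.single (M := fun _ => R) i 1 := by
    ext j i
    simp [Pi.single_apply]
  rw [map_twoForm, hT, twoForm_linearCombination]

theorem mul_twoForm_pow_mem_exteriorPower (v : κ → M) (X Y : Matrix κ κ R) (m : ℕ) :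
    twoForm v X * twoForm v Y ^ m ∈ ⋀[R]^(2 * (m + 1)) M := by
  rw [exteriorPower, pow_mul, pow_succ']
  exact Submodule.mul_mem_mul (twoForm_mem_exteriorPower v X)
    (Submodule.pow_mem_pow _ (twoForm_mem_exteriorPower v Y) m)

end TwoForm

section SkewOfSquareZero

variable {R κ : Type*} [CommRing R] [Fintype κ] [DecidableEq κ]

theorem det_one_sub_two_smul_of_skew {t : Matrix κ κ R} (ht : tᵀ = -t) (htt : t * t = 0) :
    det (1 - (2 : ℕ) • t) = 1 := by
  have hsq : (1 - t) * (1 - t) = 1 - (2 : ℕ) • t := by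
    simp only [mul_sub, sub_mul, mul_one, one_mul, htt]; abel
  have horth : (1 - t) * (1 - t)ᵀ = 1 := by
    simp [ht, mul_add, sub_mul, htt]
  have hdet := congrArg det horth
  rw [det_mul, det_transpose, det_one] at hdet
  rw [← hsq, det_mul, hdet]

theorem smul_twoForm_pow_eq_zero {m : ℕ} (hκ : Fintype.card κ = 2 * (m + 1)) {B s t : Matrix κ κ R}
    {c : R} (ht : tᵀ = -t) (htt : t * t = 0) (htB : t * B = B * t) (hts : t * s = c • B)
    (hst : s * t = -(c • B)) :
    (4 * c) • twoForm (Pi.single · (1 : R)) B ^ (m + 1) = 0 := by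
  set T : Matrix κ κ R := 1 - (2 : ℕ) • t with hT
  have hTt : Tᵀ = 1 + (2 : ℕ) • t := by
    rw [hT, transpose_sub, transpose_one, transpose_smul, ht, smul_neg, sub_neg_eq_add]
  have hTB : T * B * Tᵀ = B := by
    have hcomm : T * B = B * T := by
      simp only [hT, sub_mul, mul_sub, one_mul, mul_one, smul_mul_assoc, mul_smul_comm, htB]
    have horth : T * Tᵀ = 1 := by
      rw [hTt, hT]
      simp only [sub_mul, mul_add, one_mul, mul_one, smul_mul_assoc, mul_smul_comm, htt]
      abel
    rw [hcomm, mul_assoc, horth, mul_one]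
  have hTs : T * s * Tᵀ = s - (4 * c) • B := by
    have htst : (2 : ℕ) • (t * s * t) = 0 := by
      rw [two_nsmul]
      nth_rw 1 [hts]
      rw [mul_assoc, hst, smul_mul, mul_neg, Matrix.mul_smul, htB, add_neg_cancel]
    have hexpand : T * s * Tᵀ =
        s + (2 : ℕ) • (s * t) - (2 : ℕ) • (t * s) - (2 : ℕ) • ((2 : ℕ) • (t * s * t)) := by
      rw [hTt, hT]
      noncomm_ring
    rw [hexpand, htst, hts, hst]
    module
  have hinv := exteriorAlgebra_map_eq_det_smul ((Pi.basisFun R κ).reindex (Fintype.equivFin κ))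
    (toLin' T) (hκ ▸ mul_twoForm_pow_mem_exteriorPower (Pi.single · 1) s B m)
  rw [map_mul, map_pow, map_toLin'_twoForm_single, map_toLin'_twoForm_single, hTB, hTs,
    LinearMap.det_toLin', det_one_sub_two_smul_of_skew ht htt, one_smul, map_sub, sub_mul,
    sub_eq_self, map_smul, smul_mul_assoc, ← pow_succ'] at hinv
  exact hinv

end SkewOfSquareZero

section SquareZeroFamilies

variable {Z κ : Type*} [CommRing Z]

theorem add_pow_succ_of_mul_self_eq_zero {x : Z} (hx : x * x = 0) (y : Z) (k : ℕ) :
    (x + y) ^ (k + 1) = y ^ (k + 1) + (k + 1) * x * y ^ k := by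
  induction k with
  | zero => simp [add_comm]
  | succ k ih =>
    rw [pow_succ, ih]
    push_cast
    linear_combination ((k : Z) + 1) * y ^ k * hx

theorem mul_add_pow_of_mul_eq_zero {e x : Z} (hex : e * x = 0) (y : Z) (k : ℕ) :
    e * (x + y) ^ k = e * y ^ k := by
  induction k with
  | zero => simp
  | succ k ih =>
    rw [pow_succ', pow_succ']
    linear_combination (x + y) ^ k * hex + y * ih

theorem sum_pow_card_of_mul_self_eq_zero {x : κ → Z} (hx : ∀ i, x i * x i = 0)
    (s : Finset κ) : (∑ i ∈ s, x i) ^ s.card = s.card.factorial * ∏ i ∈ s, x i := by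
  classical
  induction s using Finset.induction_on with
  | empty => simp
  | insert a s ha ih =>
    have hzero : (∑ i ∈ s, x i) ^ (s.card + 1) = 0 := by
      rw [pow_succ, ih, mul_assoc, Finset.mul_sum, Finset.sum_eq_zero, mul_zero]
      intro i hi
      rw [← Finset.mul_prod_erase _ _ hi]
      linear_combination (∏ j ∈ s.erase i, x j) * hx i
    rw [Finset.sum_insert ha, Finset.prod_insert ha, Finset.card_insert_of_notMem ha,
      add_pow_succ_of_mul_self_eq_zero (hx a), hzero, ih, Nat.factorial_succ]
    push_cast
    ring

end SquareZeroFamilies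

/-- The relations satisfied by the products `E k l = f k * g l` of two families of anticommuting
elements of square zero. -/
structure IsOddProductMatrix {Z κ : Type*} [CommRing Z] (E : Matrix κ κ Z) : Prop where
  mul_swap : ∀ k l k' l', E k l * E k' l' = -(E k l' * E k' l)
  mul_same_row : ∀ k l l', E k l * E k l' = 0
  mul_same_col : ∀ k k' l, E k l * E k' l = 0

namespace IsOddProductMatrix

variable {R Z κ : Type*} [CommRing R] [CommRing Z] [Algebra R Z] [Fintype κ] {E : Matrix κ κ Z}

theorem mul_rowSum (hE : IsOddProductMatrix E) (k l : κ) (c : κ → R) :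
    E k l * ∑ l', c l' • E k l' = 0 := by
  simp only [Finset.mul_sum, mul_smul_comm, hE.mul_same_row, smul_zero, Finset.sum_const_zero]

theorem rowSum_mul_self (hE : IsOddProductMatrix E) (k : κ) (c : κ → R) :
    (∑ l, c l • E k l) * ∑ l, c l • E k l = 0 := by
  rw [Finset.sum_mul]
  exact Finset.sum_eq_zero fun l _ => by rw [smul_mul_assoc, hE.mul_rowSum, smul_zero]

theorem rowSum_mul_rowSum (hE : IsOddProductMatrix E) (k k' : κ) (c : κ → R) :
    (∑ l, c l • E k l) * ∑ l, c l • E k' l = 0 := by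
  classical
  rw [Finset.sum_mul_sum, ← Finset.sum_product']
  refine Finset.sum_involution (fun p _ => p.swap) (fun p _ => ?_) (fun p _ hp hswap => hp ?_)
    (fun _ _ => Finset.mem_univ _) fun p _ => p.swap_swap
  · rw [smul_mul_smul_comm, smul_mul_smul_comm, hE.mul_swap, mul_comm (c p.1), smul_neg]
    exact neg_add_cancel _
  · rw [smul_mul_smul_comm, ← (Prod.ext_iff.mp hswap).1, Prod.fst_swap, hE.mul_same_col, smul_zero]

variable [DecidableEq κ]

theorem prod_rowSum (hE : IsOddProductMatrix E) (C : Matrix κ κ R) :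
    ∏ k, ∑ l, C k l • E k l = C.det • ∏ k, E k k := by
  let F : (κ → R) [⋀^κ]→ₗ[R] Z :=
    { (MultilinearMap.mkPiAlgebra R κ Z).compLinearMap
        (fun k => Fintype.linearCombination R (E k)) with
      map_eq_zero_of_eq' := by
        intro v i j hv hij
        have hpair : (∑ l, v i l • E i l) * ∑ l, v j l • E j l = 0 := by
          rw [hv, hE.rowSum_mul_rowSum]
        refine zero_dvd_iff.mp (hpair ▸ ?_)
        rw [← Finset.prod_pair hij (f := fun k => ∑ l, v k l • E k l)]
        exact Finset.prod_dvd_prod_of_subset _ _ _ (Finset.subset_univ _) }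
  have hF (v : κ → κ → R) : F v = ∏ k, ∑ l, v k l • E k l := rfl
  calc ∏ k, ∑ l, C k l • E k l = F C := (hF _).symm
    _ = (Pi.basisFun R κ).det C • F (Pi.basisFun R κ) := alternatingMap_eq_basis_det_smul _ _ _
    _ = C.det • ∏ k, E k k := by
      rw [hF]
      exact congrArg₂ _ (Pi.basisFun_det_apply C) (by simp [Pi.single_apply])

theorem mul_sum_pow_eq_adjugate_smul (hE : IsOddProductMatrix E) (B : Matrix κ κ R) (i j : κ) :
    E j i * (∑ k, ∑ l, B k l • E k l) ^ (Fintype.card κ - 1) =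
      (Fintype.card κ - 1).factorial • adjugate B i j • ∏ k, E k k := by
  have hcard : (Finset.univ.erase j).card = Fintype.card κ - 1 := by
    rw [Finset.card_erase_of_mem (Finset.mem_univ j), Finset.card_univ]
  have hrow : E j i = ∑ l, B.updateRow j (Pi.single i 1) j l • E j l := by
    simp [Pi.single_apply]
  have hrows : ∏ k ∈ Finset.univ.erase j, ∑ l, B k l • E k l =
      ∏ k ∈ Finset.univ.erase j, ∑ l, B.updateRow j (Pi.single i 1) k l • E k l :=
    Finset.prod_congr rfl fun k hk => by rw [updateRow_ne (Finset.ne_of_mem_erase hk)]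
  rw [← Finset.add_sum_erase _ _ (Finset.mem_univ j),
    mul_add_pow_of_mul_eq_zero (hE.mul_rowSum j i _), ← hcard,
    sum_pow_card_of_mul_self_eq_zero (x := fun k => ∑ l, B k l • E k l)
      (fun k => hE.rowSum_mul_self k (B k)), adjugate_apply,
    ← hE.prod_rowSum, ← Finset.mul_prod_erase _ _ (Finset.mem_univ j), ← hrow, hrows, nsmul_eq_mul]
  ring

end IsOddProductMatrix

section Polarization

open ExteriorAlgebra

theorem smul_sub_pow_eq_zero {R Z : Type*} [CommRing R] [CommRing Z] [Algebra R Z] {c : R} {x y : Z}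
    {k l : ℕ} (hx : c • x ^ k = 0) (hy : c • y ^ l = 0) : c • (x - y) ^ (k + l - 1) = 0 := by
  let I : Ideal Z := LinearMap.ker (LinearMap.toSpanSingleton Z Z (algebraMap R Z c))
  have hI (z : Z) : z ∈ I ↔ c • z = 0 := by
    rw [LinearMap.mem_ker, LinearMap.toSpanSingleton_apply, smul_eq_mul, mul_comm, Algebra.smul_def]
  rw [← hI] at hx hy ⊢
  rw [sub_eq_add_neg]
  refine Ideal.add_pow_mem_of_pow_mem_of_le I (m := k) (n := l) hx ?_ (by omega)
  rw [neg_pow]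
  exact I.mul_mem_left _ hy

variable {R κ N : Type*} [CommRing R] [AddCommGroup N] [Module R N]

/-- The products `f k ∧ g l` as elements of the centre of the exterior algebra. -/
def wedgeMatrix (f g : κ → N) : Matrix κ κ (Subalgebra.center R (ExteriorAlgebra R N)) :=
  Matrix.of fun k l => ⟨ι R (f k) * ι R (g l),
    mem_center_of_even (CliffordAlgebra.ι_mul_ι_mem_evenOdd_zero _ _ _)⟩

theorem coe_wedgeMatrix (f g : κ → N) (k l : κ) :
    (wedgeMatrix (R := R) f g k l : ExteriorAlgebra R N) = ι R (f k) * ι R (g l) := rfl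

theorem isOddProductMatrix_wedgeMatrix (f g : κ → N) :
    IsOddProductMatrix (wedgeMatrix (R := R) f g) := by
  have hswap (v w : N) : ι R v * ι R w = -(ι R w * ι R v) :=
    eq_neg_of_add_eq_zero_left (ι_add_mul_swap v w)
  have hmul (k l k' l' : κ) : ι R (f k) * ι R (g l) * (ι R (f k') * ι R (g l')) =
      -(ι R (f k) * ι R (f k') * (ι R (g l) * ι R (g l'))) := by
    rw [mul_assoc, ← mul_assoc (ι R (g l)), hswap (g l)]
    noncomm_ring
  refine ⟨fun k l k' l' => Subtype.ext ?_, fun k l l' => Subtype.ext ?_,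
    fun k k' l => Subtype.ext ?_⟩
  · change _ = -(_ * _)
    simp only [MulMemClass.coe_mul, coe_wedgeMatrix, hmul, hswap (g l) (g l'), mul_neg]
  · simp only [MulMemClass.coe_mul, coe_wedgeMatrix, hmul, ι_sq_zero, zero_mul, neg_zero,
      ZeroMemClass.coe_zero]
  · simp only [MulMemClass.coe_mul, coe_wedgeMatrix, hmul, ι_sq_zero, mul_zero, neg_zero,
      ZeroMemClass.coe_zero]

variable [Fintype κ]

theorem twoForm_add_sub_twoForm_sub {B : Matrix κ κ R} (hB : Bᵀ = -B) (f g : κ → N) :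
    twoForm (f + g) B - twoForm (f - g) B =
      (4 : R) • ∑ k, ∑ l, B k l • (ι R (f k) * ι R (g l)) := by
  have hgf : ∑ k, ∑ l, B k l • (ι R (g k) * ι R (f l)) =
      ∑ k, ∑ l, B k l • (ι R (f k) * ι R (g l)) := by
    rw [Finset.sum_comm]
    refine Finset.sum_congr rfl fun k _ => Finset.sum_congr rfl fun l _ => ?_
    rw [← transpose_apply B, hB, neg_apply, eq_neg_of_add_eq_zero_left (ι_add_mul_swap (g l) (f k)),
      neg_smul_neg]
  have hsplit : twoForm (f + g) B - twoForm (f - g) B =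
      (2 : R) • ∑ k, ∑ l, B k l • (ι R (f k) * ι R (g l)) +
        (2 : R) • ∑ k, ∑ l, B k l • (ι R (g k) * ι R (f l)) := by
    simp only [twoForm_apply, Finset.smul_sum, ← Finset.sum_add_distrib, ← Finset.sum_sub_distrib,
      Pi.add_apply, Pi.sub_apply, map_add, map_sub, add_mul, mul_add, sub_mul, mul_sub]
    refine Finset.sum_congr rfl fun k _ => Finset.sum_congr rfl fun l _ => ?_
    module
  rw [hsplit, hgf, ← add_smul]
  norm_num

theorem smul_sum_wedgeMatrix_pow_eq_zero [DecidableEq κ] {B : Matrix κ κ R} (hB : Bᵀ = -B) {c : R}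
    {m : ℕ} (h : c • twoForm (Pi.single · (1 : R)) B ^ (m + 1) = 0) (f g : κ → N) :
    (4 ^ (2 * m + 1) * c) • (∑ k, ∑ l, B k l • wedgeMatrix (R := R) f g k l) ^ (2 * m + 1) = 0 := by
  have hsubst (v : κ → N) : c • twoForm v B ^ (m + 1) = 0 := by
    have hv := congrArg (ExteriorAlgebra.map (Fintype.linearCombination R v)) h
    rw [map_smul, map_pow, map_twoForm, map_zero] at hv
    convert hv using 5
    ext k
    rw [Function.comp_apply, Fintype.linearCombination_apply_single, one_smul]
  let ω (v : κ → N) : Subalgebra.center R (ExteriorAlgebra R N) :=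
    ⟨twoForm v B, mem_center_of_even (twoForm_mem_parityPart_zero v B)⟩
  have hω (v : κ → N) : c • ω v ^ (m + 1) = 0 := Subtype.ext (hsubst v)
  have hpolar : ω (f + g) - ω (f - g) =
      (4 : R) • ∑ k, ∑ l, B k l • wedgeMatrix (R := R) f g k l := by
    refine Subtype.ext ((twoForm_add_sub_twoForm_sub hB f g).trans ?_)
    simp [coe_wedgeMatrix]
  rw [mul_comm, mul_smul, ← smul_pow, ← hpolar, show 2 * m + 1 = m + 1 + (m + 1) - 1 by omega]
  exact smul_sub_pow_eq_zero (hω (f + g)) (hω (f - g))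

theorem exists_coe_prod_wedgeMatrix_eq_ιMulti_basis :
    ∃ f g : κ → Fin (Fintype.card κ * 2) → R,
      ((∏ k, wedgeMatrix (R := R) f g k k : Subalgebra.center R _) : ExteriorAlgebra R _) =
        ιMulti R (Fintype.card κ * 2) (Pi.basisFun R _) := by
  let v (j : Fin 2) (k : κ) : Fin (Fintype.card κ * 2) → R :=
    Pi.basisFun R _ (finProdFinEquiv (Fintype.equivFin κ k, j))
  refine ⟨v 0, v 1, ?_⟩
  let w (i : Fin (Fintype.card κ)) :
      Subalgebra.center R (ExteriorAlgebra R (Fin (Fintype.card κ * 2) → R)) :=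
    wedgeMatrix (v 0) (v 1) ((Fintype.equivFin κ).symm i) ((Fintype.equivFin κ).symm i)
  have hw (i : Fin (Fintype.card κ)) : (w i : ExteriorAlgebra R (Fin (Fintype.card κ * 2) → R)) =
      ι R (Pi.basisFun R _ (finProdFinEquiv (i, 0))) *
        ι R (Pi.basisFun R _ (finProdFinEquiv (i, 1))) := by
    simp only [w, coe_wedgeMatrix, v, Equiv.apply_symm_apply]
  have hprod : ∏ k, wedgeMatrix (R := R) (v 0) (v 1) k k = (List.ofFn w).prod := by
    rw [List.prod_ofFn]
    exact ((Fintype.equivFin κ).symm.prod_comp _).symm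
  rw [hprod, ιMulti_apply, List.ofFn_mul, List.prod_flatten, List.map_ofFn]
  refine (map_list_prod (Subalgebra.center R _).val _).trans ?_
  rw [List.map_ofFn]
  congr 2
  ext i
  simp [hw, finProdFinEquiv, mul_comm 2, add_comm 1]

theorem smul_adjugate_eq_zero [DecidableEq κ] [IsAddTorsionFree R] {B : Matrix κ κ R}
    (hB : Bᵀ = -B) {c : R} {m : ℕ} (hκ : Fintype.card κ = 2 * (m + 1))
    (h : c • twoForm (Pi.single · (1 : R)) B ^ (m + 1) = 0) : c • adjugate B = 0 := by
  obtain ⟨f, g, hfg⟩ := exists_coe_prod_wedgeMatrix_eq_ιMulti_basis (R := R) (κ := κ)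
  ext i j
  have hE := congrArg (wedgeMatrix (R := R) f g j i * ·) (smul_sum_wedgeMatrix_pow_eq_zero hB h f g)
  have hadj := (isOddProductMatrix_wedgeMatrix (R := R) f g).mul_sum_pow_eq_adjugate_smul B i j
  rw [show Fintype.card κ - 1 = 2 * m + 1 by omega] at hadj
  simp only [mul_smul_comm, hadj, mul_zero] at hE
  have hzero := congrArg Subtype.val hE
  simp only [← Nat.cast_smul_eq_nsmul R, smul_smul] at hzero
  change _ • (_ : ExteriorAlgebra R _) = 0 at hzero
  rw [hfg, smul_ιMulti_basis_eq_zero_iff] at hzero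
  have hnat : (4 ^ (2 * m + 1) * (2 * m + 1).factorial) • (c • adjugate B i j) = 0 := by
    rw [nsmul_eq_mul, smul_eq_mul]
    push_cast
    linear_combination hzero
  exact (nsmul_eq_zero_iff_right (by positivity)).mp hnat

theorem smul_pow_card_sub_one_eq_zero [DecidableEq κ] [IsAddTorsionFree R] {B s t : Matrix κ κ R}
    {c : R} {m : ℕ} (hκ : Fintype.card κ = 2 * (m + 1)) (hB : Bᵀ = -B)
    (htrace : ∀ k, 0 < k → trace (B ^ k) = 0) (ht : tᵀ = -t) (htt : t * t = 0)
    (htB : t * B = B * t) (hts : t * s = c • B) (hst : s * t = -(c • B)) :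
    c • B ^ (Fintype.card κ - 1) = 0 := by
  have hadj : (4 * c) • adjugate B = 0 :=
    smul_adjugate_eq_zero hB hκ (smul_twoForm_pow_eq_zero hκ ht htt htB hts hst)
  rw [← adjugate_neg_eq_pow_of_charpoly_eq_X_pow (charpoly_eq_X_pow_of_trace_pow_eq_zero htrace),
    ← neg_one_smul R B, adjugate_smul, smul_comm]
  convert smul_zero _
  ext i j
  have hij : 4 • (c • adjugate B i j) = 0 := by
    rw [nsmul_eq_mul, Nat.cast_ofNat, smul_eq_mul, ← mul_assoc]
    exact congrFun₂ hadj i j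
  exact (nsmul_eq_zero_iff_right four_ne_zero).mp hij

end Polarization

section OddMatrices

open ExteriorAlgebra (ι)
open Finset.HasAntidiagonal (antidiagonal mem_antidiagonal)

variable {R M κ : Type*} [CommRing R] [AddCommGroup M] [Module R M] [Fintype κ]

section Products

variable {P Q : Matrix κ κ (ExteriorAlgebra R M)} {p q : ZMod 2}

theorem mul_apply_mem_parityPart (hP : ∀ i j, P i j ∈ parityPart R M p)
    (hQ : ∀ i j, Q i j ∈ parityPart R M q) (i j : κ) : (P * Q) i j ∈ parityPart R M (p + q) :=
  Submodule.sum_mem _ fun k _ => CliffordAlgebra.evenOdd_mul_le _ p q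
    (Submodule.mul_mem_mul (hP i k) (hQ k j))

theorem transpose_mul_of_mem_parityPart (hP : ∀ i j, P i j ∈ parityPart R M p)
    (hQ : ∀ i j, Q i j ∈ parityPart R M q) : (P * Q)ᵀ = (-1 : ℤˣ) ^ (q * p) • (Qᵀ * Pᵀ) := by
  ext i j
  simp only [transpose_apply, Matrix.smul_apply, mul_apply, Finset.smul_sum]
  exact Finset.sum_congr rfl fun k _ => mul_eq_smul_mul_of_mem_parityPart (hP j k) (hQ k i)

theorem trace_mul_of_mem_parityPart (hP : ∀ i j, P i j ∈ parityPart R M p)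
    (hQ : ∀ i j, Q i j ∈ parityPart R M q) :
    trace (P * Q) = (-1 : ℤˣ) ^ (q * p) • trace (Q * P) := by
  simp only [trace, diag_apply, mul_apply, Finset.smul_sum]
  rw [Finset.sum_comm]
  exact Finset.sum_congr rfl fun k _ => Finset.sum_congr rfl fun i _ =>
    mul_eq_smul_mul_of_mem_parityPart (hP i k) (hQ k i)

end Products

theorem mul_ι_smul {P Q : Matrix κ κ (ExteriorAlgebra R M)}
    (hP : ∀ i j, P i j ∈ parityPart R M 1) (w : M) : P * ι R w • Q = -(ι R w • (P * Q)) := by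
  ext k l
  simp only [mul_apply, Matrix.neg_apply, Matrix.smul_apply, smul_eq_mul, Finset.mul_sum,
    ← Finset.sum_neg_distrib, ← mul_assoc]
  exact Finset.sum_congr rfl fun r _ => by
    rw [mul_eq_neg_mul_of_odd (hP k r) (ι_mem_parityPart_one w), neg_mul]

theorem ι_smul_mul_ι_smul {P Q : Matrix κ κ (ExteriorAlgebra R M)}
    (hP : ∀ i j, P i j ∈ parityPart R M 1) (v w : M) :
    ι R v • P * ι R w • Q = -((ι R v * ι R w) • (P * Q)) := by
  rw [smul_mul_assoc, mul_ι_smul hP, smul_neg, smul_smul]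

variable [DecidableEq κ] {a : Matrix κ κ (ExteriorAlgebra R M)}

theorem pow_apply_mem_parityPart (ha : ∀ i j, a i j ∈ parityPart R M 1) (k : ℕ) (i j : κ) :
    (a ^ k) i j ∈ parityPart R M k := by
  induction k generalizing i j with
  | zero =>
    rw [pow_zero, one_apply]
    split_ifs
    · exact CliffordAlgebra.one_le_evenOdd_zero _ (Submodule.one_le.mp le_rfl)
    · exact Submodule.zero_mem _
  | succ k ih =>
    rw [pow_succ, Nat.cast_succ]
    exact mul_apply_mem_parityPart ih ha i j

theorem trace_pow_eq_zero_of_even [IsAddTorsionFree (ExteriorAlgebra R M)]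
    (ha : ∀ i j, a i j ∈ parityPart R M 1) {k : ℕ} (hk : k ≠ 0) (heven : Even k) :
    trace (a ^ k) = 0 := by
  obtain ⟨l, rfl⟩ := Nat.exists_eq_succ_of_ne_zero hk
  have hl : (l : ZMod 2) = 1 := by
    rw [ZMod.natCast_eq_one_iff_odd]
    exact Nat.not_even_iff_odd.mp (Nat.even_add_one.mp heven)
  have h := trace_mul_of_mem_parityPart (pow_apply_mem_parityPart ha l) ha
  rw [← pow_succ, ← pow_succ', hl] at h
  exact self_eq_neg.mp (by simpa using h)

theorem sum_range_neg_one_pow_half (m : ℕ) :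
    ∑ i ∈ Finset.range (4 * m + 1), (-1 : ℤ) ^ (i / 2) = 1 := by
  induction m with
  | zero => simp
  | succ m ih =>
    rw [show 4 * (m + 1) + 1 = 4 * m + 1 + 1 + 1 + 1 + 1 by ring]
    simp only [Finset.sum_range_succ _ (4 * m + _), ih]
    rw [show (4 * m + 1) / 2 = 2 * m by omega, show (4 * m + 1 + 1) / 2 = 2 * m + 1 by omega,
      show (4 * m + 1 + 1 + 1) / 2 = 2 * m + 1 by omega,
      show (4 * m + 1 + 1 + 1 + 1) / 2 = 2 * m + 1 + 1 by omega]
    simp [pow_succ, pow_mul]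

/-- Skew-symmetric matrices with odd entries in an exterior algebra. -/
structure IsOddSkew {R M κ : Type*} [CommRing R] [AddCommGroup M] [Module R M]
    (a : Matrix κ κ (ExteriorAlgebra R M)) : Prop where
  apply_mem : ∀ i j, a i j ∈ parityPart R M 1
  transpose_eq : aᵀ = -a

namespace IsOddSkew

theorem transpose_pow (ha : IsOddSkew a) (k : ℕ) :
    (a ^ k)ᵀ = (-1 : ℤˣ) ^ ((k + 1) / 2) • a ^ k := by
  induction k with
  | zero => simp
  | succ k ih =>
    rw [pow_succ, transpose_mul_of_mem_parityPart (pow_apply_mem_parityPart ha.apply_mem k)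
      ha.apply_mem, ih, ha.transpose_eq, mul_smul_comm, neg_mul, ← pow_succ', ← pow_succ, one_mul,
      smul_smul, smul_neg, ← Units.neg_smul, ← neg_one_mul, uzpow_natCast]
    congr 1
    rcases Nat.even_or_odd' k with ⟨l, rfl | rfl⟩
    · rw [show (2 * l + 1 + 1) / 2 = l + 1 by omega, show (2 * l + 1) / 2 = l by omega]
      simp [pow_succ, pow_mul]
    · rw [show (2 * l + 1 + 1 + 1) / 2 = l + 1 by omega, show (2 * l + 1 + 1) / 2 = l + 1 by omega]
      simp [pow_succ, pow_mul]

theorem transpose_pow_four_mul (ha : IsOddSkew a) (m : ℕ) : (a ^ (4 * m))ᵀ = a ^ (4 * m) := by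
  rw [ha.transpose_pow, show (4 * m + 1) / 2 = 2 * m by omega, (even_two_mul m).neg_one_pow,
    one_smul]

theorem sum_transpose_pow_mul_pow (ha : IsOddSkew a) (m : ℕ) :
    ∑ p ∈ antidiagonal (4 * m), (-1 : ℤ) ^ p.1 • ((a ^ p.1)ᵀ * a ^ p.2) = a ^ (4 * m) := by
  have hterm (p : ℕ × ℕ) (hp : p ∈ antidiagonal (4 * m)) :
      (-1 : ℤ) ^ p.1 • ((a ^ p.1)ᵀ * a ^ p.2) = (-1 : ℤ) ^ (p.1 / 2) • a ^ (4 * m) := by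
    rw [ha.transpose_pow, smul_mul_assoc, ← pow_add, mem_antidiagonal.mp hp]
    rw [Units.smul_def, smul_smul]
    congr 1
    obtain ⟨l, hl | hl⟩ := Nat.even_or_odd' p.1
    · rw [hl, show (2 * l + 1) / 2 = l by omega, show 2 * l / 2 = l by omega]
      simp [pow_mul]
    · rw [hl, show (2 * l + 1 + 1) / 2 = l + 1 by omega, show (2 * l + 1) / 2 = l by omega]
      simp [pow_succ, pow_mul]
  rw [Finset.sum_congr rfl hterm, ← Finset.sum_smul,
    Finset.Nat.sum_antidiagonal_eq_sum_range_succ_mk, sum_range_neg_one_pow_half, one_smul]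

variable [IsAddTorsionFree (ExteriorAlgebra R M)]

theorem trace_pow_eq_zero_of_mod_four (ha : IsOddSkew a) {k : ℕ} (hk : k % 4 = 1) :
    trace (a ^ k) = 0 := by
  have hodd : Odd ((k + 1) / 2) := ⟨k / 4, by omega⟩
  have h := congrArg trace (ha.transpose_pow k)
  rw [trace_transpose, hodd.neg_one_pow, trace_smul] at h
  exact self_eq_neg.mp (by simpa using h)

theorem trace_pow_smul_pow_add_transpose (ha : IsOddSkew a) {p q m : ℕ} (hp : p ≠ 0)
    (hpq : p + q = 4 * m) : trace (a ^ p) • (a ^ q + (a ^ q)ᵀ) = 0 := by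
  rcases Nat.even_or_odd p with heven | hodd
  · rw [trace_pow_eq_zero_of_even ha.apply_mem hp heven, zero_smul]
  · obtain hp1 | hp3 := Nat.odd_mod_four_iff.mp (Nat.odd_iff.mp hodd)
    · rw [ha.trace_pow_eq_zero_of_mod_four hp1, zero_smul]
    · have hq : Odd ((q + 1) / 2) := ⟨q / 4, by omega⟩
      rw [ha.transpose_pow, hq.neg_one_pow, Units.neg_smul, one_smul, add_neg_cancel, smul_zero]

theorem sum_trace_smul_pow_add_transpose (ha : IsOddSkew a) (m : ℕ) :
    ∑ p ∈ antidiagonal (4 * m), (-1 : ℤ) ^ p.1 • trace (a ^ p.1) • (a ^ p.2 + (a ^ p.2)ᵀ) =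
      (2 * Fintype.card κ) • a ^ (4 * m) := by
  rw [Finset.sum_eq_single (0, 4 * m)]
  · rw [ha.transpose_pow_four_mul, ← two_nsmul, pow_zero, pow_zero, trace_one, one_smul,
      Nat.cast_smul_eq_nsmul, smul_smul, mul_comm]
  · intro p hp hne
    have hp0 : p.1 ≠ 0 := fun h0 => hne (by ext <;> simp_all)
    rw [ha.trace_pow_smul_pow_add_transpose hp0 (mem_antidiagonal.mp hp), smul_zero]
  · simp

theorem mul_pow_eq_zero_of_even_card (ha : IsOddSkew a) {m : ℕ}
    (hκ : Fintype.card κ = 2 * (m + 1)) (u v : M) (i j : κ) :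
    ι R u * ι R v * (a ^ (2 * (Fintype.card κ - 1))) i j = 0 := by
  let Z := Subalgebra.center R (ExteriorAlgebra R M)
  have : IsAddTorsionFree Z :=
    Function.Injective.isAddTorsionFree Z.val.toAddMonoidHom Subtype.val_injective
  let φ : Matrix κ κ Z →+* Matrix κ κ (ExteriorAlgebra R M) := Z.val.toRingHom.mapMatrix
  have hφ : Function.Injective φ := Matrix.map_injective Subtype.val_injective
  have hswap : ι R v * ι R u = -(ι R u * ι R v) :=
    eq_neg_of_add_eq_zero_left (ExteriorAlgebra.ι_add_mul_swap v u)
  obtain ⟨B, hB⟩ : ∃ B, φ B = a * a :=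
    ⟨of fun k l => ⟨(a * a) k l, Subalgebra.sum_mem _ fun r _ =>
      mul_mem_center_of_odd (ha.apply_mem k r) (ha.apply_mem r l)⟩, rfl⟩
  have hlift (w : M) : ∃ t, φ t = ι R w • a :=
    ⟨of fun k l => ⟨ι R w * a k l,
      mul_mem_center_of_odd (ι_mem_parityPart_one w) (ha.apply_mem k l)⟩, rfl⟩
  obtain ⟨s, hs⟩ := hlift u
  obtain ⟨t, ht⟩ := hlift v
  obtain ⟨c, hc⟩ : ∃ c : Z, ∀ X, φ (c • X) = (ι R u * ι R v) • φ X :=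
    ⟨⟨ι R u * ι R v, mul_mem_center_of_odd (ι_mem_parityPart_one u) (ι_mem_parityPart_one v)⟩,
      fun _ => rfl⟩
  have htrace (k : ℕ) (hk : 0 < k) : trace (B ^ k) = 0 := by
    refine Subtype.ext ((AddMonoidHom.map_trace Z.val _).trans ?_)
    change trace (φ (B ^ k)) = 0
    rw [map_pow, hB, ← pow_two, ← pow_mul]
    exact trace_pow_eq_zero_of_even ha.apply_mem (by omega) (even_two_mul k)
  have hzero : c • B ^ (Fintype.card κ - 1) = 0 := by
    refine smul_pow_card_sub_one_eq_zero hκ (s := s) (t := t) (hφ ?_) htrace (hφ ?_) (hφ ?_)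
      (hφ ?_) (hφ ?_) (hφ ?_)
    · change (φ B)ᵀ = -φ B
      simp [hB, ← pow_two, ha.transpose_pow 2, Units.neg_smul]
    · change (φ t)ᵀ = -φ t
      rw [ht, transpose_smul, ha.transpose_eq, smul_neg]
    · rw [map_mul, ht, map_zero, ι_smul_mul_ι_smul ha.apply_mem, ExteriorAlgebra.ι_sq_zero,
        zero_smul, neg_zero]
    · rw [map_mul, map_mul, ht, hB, smul_mul_assoc, mul_assoc, mul_ι_smul ha.apply_mem, mul_neg,
        mul_ι_smul ha.apply_mem, neg_neg]
    · rw [map_mul, ht, hs, hc, hB, ι_smul_mul_ι_smul ha.apply_mem, hswap, neg_smul, neg_neg]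
    · change _ = -φ (c • B)
      rw [map_mul, ht, hs, hc, hB, ι_smul_mul_ι_smul ha.apply_mem]
  have hval := congrFun₂ (congrArg φ hzero) i j
  rwa [hc, map_pow, hB, ← pow_two, ← pow_mul, map_zero] at hval

end IsOddSkew

end OddMatrices

section StandardSum

open ExteriorAlgebra (ι ιMulti)

variable {R M κ : Type*} [CommRing R] [AddCommGroup M] [Module R M] {N : ℕ}

/-- The combination `∑ s, A s ⊗ v s` of a tuple of scalar matrices with odd coefficients `v s`. Its
`N`-th power collects the standard polynomial of the tuple. -/
def oddMatrix (A : Fin N → Matrix κ κ R) (v : Fin N → M) : Matrix κ κ (ExteriorAlgebra R M) :=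
  ∑ s, (A s).map (· • ι R (v s))

theorem isOddSkew_oddMatrix {A : Fin N → Matrix κ κ R} (hA : ∀ s, (A s)ᵀ = -A s) (v : Fin N → M) :
    IsOddSkew (oddMatrix A v) where
  apply_mem i j := by
    rw [oddMatrix, Matrix.sum_apply]
    exact Submodule.sum_mem _ fun s _ => Submodule.smul_mem _ _ (ι_mem_parityPart_one (v s))
  transpose_eq := by
    rw [oddMatrix, transpose_sum, ← Finset.sum_neg_distrib]
    refine Finset.sum_congr rfl fun s _ => ?_
    rw [← transpose_map, hA]
    exact Matrix.ext fun i j => neg_smul (A s i j) (ι R (v s))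

theorem oddMatrix_cons (X : Matrix κ κ R) (A : Fin N → Matrix κ κ R) (u : M) (v : Fin N → M) :
    oddMatrix (Fin.cons X A : Fin (N + 1) → Matrix κ κ R) (Fin.cons u v : Fin (N + 1) → M) =
      X.map (· • ι R u) + oddMatrix A v := by
  simp [oddMatrix, Fin.sum_univ_succ]

variable [Fintype κ] [DecidableEq κ]

/-- The standard polynomial of degree `N`, evaluated at a tuple of matrices. -/
def standardSum (A : Fin N → Matrix κ κ R) : Matrix κ κ R :=
  ∑ σ : Equiv.Perm (Fin N), (Equiv.Perm.sign σ : ℤ) • (List.ofFn fun t => A (σ t)).prod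

theorem ofFn_map_smul_prod (A : Fin N → Matrix κ κ R) (e : Fin N → ExteriorAlgebra R M) :
    (List.ofFn fun t => (A t).map (· • e t)).prod =
      (List.ofFn A).prod.map (· • (List.ofFn e).prod) := by
  induction N with
  | zero => ext i j; by_cases h : i = j <;> simp [one_apply, h]
  | succ N ih =>
    simp only [List.ofFn_succ, List.prod_cons, ih]
    ext i j
    simp only [mul_apply, map_apply, smul_mul_smul_comm, Finset.sum_smul]

theorem oddMatrix_pow (A : Fin N → Matrix κ κ R) (v : Fin N → M) :
    oddMatrix A v ^ N = (standardSum A).map (· • ιMulti R N v) := by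
  have hexpand : oddMatrix A v ^ N =
      ∑ r : Fin N → Fin N, (List.ofFn fun t => A (r t)).prod.map (· • ιMulti R N (v ∘ r)) := by
    have h := (MultilinearMap.mkPiAlgebraFin R N (Matrix κ κ (ExteriorAlgebra R M))).map_sum
      fun _ s => (A s).map (· • ι R (v s))
    simp only [MultilinearMap.mkPiAlgebraFin_apply, List.ofFn_const, List.prod_replicate,
      ofFn_map_smul_prod] at h
    simpa only [oddMatrix, ExteriorAlgebra.ιMulti_apply, Function.comp_apply] using h
  ext i j
  rw [hexpand, Matrix.sum_apply, map_apply, standardSum, Matrix.sum_apply, Finset.sum_smul]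
  symm
  refine Finset.sum_of_injOn (fun σ : Equiv.Perm (Fin N) => ⇑σ)
    (fun _ _ _ _ h => Equiv.coe_fn_injective h) (fun _ _ => Finset.mem_coe.2 (Finset.mem_univ _))
    (fun r _ hr => ?_) (fun σ _ => ?_)
  · rw [map_apply, AlternatingMap.map_eq_zero_of_not_injective, smul_zero]
    intro h
    exact hr ⟨Equiv.ofBijective r (Finite.injective_iff_bijective.1 h.of_comp), by simp, rfl⟩
  · rw [map_apply, AlternatingMap.map_perm, Matrix.smul_apply, smul_assoc, Units.smul_def,
      smul_comm]

theorem standardSum_eq_zero_of_mul_oddMatrix_pow {A : Fin N → Matrix κ κ R} {v : Fin N → M} {n : ℕ}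
    {b : Module.Basis (Fin n) R M} {x : ExteriorAlgebra R M}
    (hx : x * ιMulti R N v = ιMulti R n b) (h : ∀ i j, x * (oddMatrix A v ^ N) i j = 0) :
    standardSum A = 0 := by
  ext i j
  refine (smul_ιMulti_basis_eq_zero_iff b).mp ?_
  rw [← hx, ← mul_smul_comm, ← map_apply (f := (· • ιMulti R N v)), ← oddMatrix_pow, h]

/-- The standard polynomial of degree `N` vanishes on the skew-symmetric `κ × κ` matrices. -/
def StandardIdentityOnSkew (R κ : Type*) [CommRing R] [Fintype κ] [DecidableEq κ] (N : ℕ) : Prop :=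
  ∀ A : Fin N → Matrix κ κ R, (∀ s, (A s)ᵀ = -A s) → standardSum A = 0

theorem isAddTorsionFree_of_algebra_rat (R M : Type*) [CommRing R] [Algebra ℚ R] [AddCommGroup M]
    [Module R M] : IsAddTorsionFree M :=
  letI := Module.compHom M (algebraMap ℚ R)
  IsAddTorsionFree.of_module_rat M

theorem standardIdentityOnSkew_of_even_card [Algebra ℚ R] {m : ℕ}
    (hκ : Fintype.card κ = 2 * (m + 1)) :
    StandardIdentityOnSkew R κ (2 * (Fintype.card κ - 1)) := by
  intro A hA
  set N := 2 * (Fintype.card κ - 1)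
  let b := Pi.basisFun R (Fin (N + 2))
  have := isAddTorsionFree_of_algebra_rat R (ExteriorAlgebra R (Fin (N + 2) → R))
  refine standardSum_eq_zero_of_mul_oddMatrix_pow (v := fun s => b s.succ.succ) (b := b)
    (x := ι R (b 0) * ι R (b 1)) ?_ fun i j =>
      (isOddSkew_oddMatrix hA _).mul_pow_eq_zero_of_even_card hκ _ _ i j
  rw [ExteriorAlgebra.ιMulti_succ_apply, ExteriorAlgebra.ιMulti_succ_apply, mul_assoc]
  rfl

end StandardSum

section Linearization

open ExteriorAlgebra (ι ιMulti)
open Finset.HasAntidiagonal (antidiagonal)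

variable {R M κ : Type*} [CommRing R] [AddCommGroup M] [Module R M] [Fintype κ]

theorem map_algebraMap_mul_ι_smul (X : Matrix κ κ R) (u : M)
    (Q : Matrix κ κ (ExteriorAlgebra R M)) :
    X.map (algebraMap R (ExteriorAlgebra R M)) * ι R u • Q =
      ι R u • (X.map (algebraMap R (ExteriorAlgebra R M)) * Q) := by
  ext i j
  simp only [mul_apply, map_apply, Matrix.smul_apply, smul_eq_mul, Finset.mul_sum,
    Algebra.left_comm]

variable [DecidableEq κ]

theorem ι_smul_add_pow_succ {a : Matrix κ κ (ExteriorAlgebra R M)}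
    (ha : ∀ i j, a i j ∈ parityPart R M 1) (X : Matrix κ κ R) (u : M) (k : ℕ) :
    (ι R u • X.map (algebraMap R (ExteriorAlgebra R M)) + a) ^ (k + 1) = a ^ (k + 1) +
      ι R u • ∑ p ∈ antidiagonal k, (-1 : ℤ) ^ p.1 •
        (a ^ p.1 * X.map (algebraMap R (ExteriorAlgebra R M)) * a ^ p.2) := by
  induction k with
  | zero => simp [add_comm]
  | succ k ih =>
    rw [pow_succ', ih, Finset.Nat.sum_antidiagonal_succ]
    simp only [add_mul, mul_add, smul_mul_assoc, map_algebraMap_mul_ι_smul, mul_ι_smul ha,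
      smul_smul, ExteriorAlgebra.ι_sq_zero, zero_smul, smul_add, Finset.mul_sum, ← pow_succ',
      pow_succ (-1 : ℤ), mul_neg_one, neg_smul, mul_smul_comm, ← mul_assoc, pow_zero, one_smul,
      one_mul, Finset.sum_neg_distrib, smul_neg]
    abel

variable {N : ℕ} {A : Fin N → Matrix κ κ R}

namespace StandardIdentityOnSkew

theorem oddMatrix_pow_eq_zero (h : StandardIdentityOnSkew R κ N) (hA : ∀ s, (A s)ᵀ = -A s)
    (v : Fin N → M) : oddMatrix A v ^ N = 0 := by
  rw [oddMatrix_pow, h A hA]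
  exact Matrix.ext fun _ _ => zero_smul R (ιMulti R N v)

theorem ι_smul_sum_eq_zero (h : StandardIdentityOnSkew R κ (N + 1)) (hA : ∀ s, (A s)ᵀ = -A s)
    (u : M) (v : Fin N → M) {X : Matrix κ κ R} (hX : Xᵀ = -X) :
    ι R u • ∑ p ∈ antidiagonal N, (-1 : ℤ) ^ p.1 • (oddMatrix A v ^ p.1 *
      X.map (algebraMap R (ExteriorAlgebra R M)) * oddMatrix A v ^ p.2) = 0 := by
  have hpow {Y : Matrix κ κ R} (hY : Yᵀ = -Y) :
      (ι R u • Y.map (algebraMap R (ExteriorAlgebra R M)) + oddMatrix A v) ^ (N + 1) = 0 := by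
    have hY' : ι R u • Y.map (algebraMap R (ExteriorAlgebra R M)) = Y.map (· • ι R u) := by
      ext i j
      simp [Algebra.smul_def, Algebra.commutes]
    rw [hY', ← oddMatrix_cons]
    exact h.oddMatrix_pow_eq_zero (Fin.cases hY hA) _
  have ha : oddMatrix A v ^ (N + 1) = 0 := by simpa using hpow (Y := 0) (by simp)
  simpa only [ι_smul_add_pow_succ (isOddSkew_oddMatrix hA v).apply_mem, ha, zero_add]
    using hpow hX

theorem ι_mul_sum_eq_zero (h : StandardIdentityOnSkew R κ (N + 1)) (hA : ∀ s, (A s)ᵀ = -A s)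
    (u : M) (v : Fin N → M) (i j k l : κ) :
    ι R u * ∑ p ∈ antidiagonal N, (-1 : ℤ) ^ p.1 •
      ((oddMatrix A v ^ p.1) i k * (oddMatrix A v ^ p.2) l j -
        (oddMatrix A v ^ p.1) i l * (oddMatrix A v ^ p.2) k j) = 0 := by
  have hentry (P Q : Matrix κ κ (ExteriorAlgebra R M)) :
      (P * (single k l 1 - single l k 1 : Matrix κ κ R).map (algebraMap R (ExteriorAlgebra R M)) *
        Q) i j = P i k * Q l j - P i l * Q k j := by
    rw [Matrix.map_sub _ (map_sub _), mul_sub, sub_mul, Matrix.sub_apply]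
    simp [mul_apply, single_apply, ite_and, Finset.sum_ite_eq]
  have hsum := congrFun₂ (h.ι_smul_sum_eq_zero hA u v (X := single k l 1 - single l k 1)
    (by simp)) i j
  simpa only [Matrix.smul_apply, Matrix.sum_apply, hentry, smul_eq_mul, Matrix.zero_apply]
    using hsum

theorem of_sum_unit (h : StandardIdentityOnSkew R (κ ⊕ Unit) (N + 1)) :
    StandardIdentityOnSkew R κ N := by
  intro A hA
  let b := Pi.basisFun R (Fin (N + 1))
  let v (s : Fin N) := b s.succ
  refine standardSum_eq_zero_of_mul_oddMatrix_pow (v := v) (b := b) (x := ι R (b 0))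
    (ExteriorAlgebra.ιMulti_succ_apply ⇑b).symm fun i j => ?_
  have hpow (k : ℕ) : oddMatrix (fun s => fromBlocks (A s) 0 0 (0 : Matrix Unit Unit R)) v ^ k =
      fromBlocks (oddMatrix A v ^ k) 0 0 (0 ^ k) := by
    rw [← fromBlocks_diagonal_pow]
    congr 1
    ext (i | i) (j | j) <;> simp [oddMatrix, Matrix.sum_apply]
  have hsum := h.ι_mul_sum_eq_zero (A := fun s => fromBlocks (A s) 0 0 0)
    (fun s => by simp [fromBlocks_transpose, fromBlocks_neg, hA]) (b 0) v
    (.inl i) (.inr ()) (.inl j) (.inr ())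
  simp only [hpow, fromBlocks_apply₁₁, fromBlocks_apply₁₂, fromBlocks_apply₂₂] at hsum
  rw [Finset.sum_eq_single (N, 0)] at hsum
  · rw [mul_smul_comm, (isUnit_one.neg.pow N).smul_eq_zero] at hsum
    simpa using hsum
  · intro p hp hne
    have : p.2 ≠ 0 := fun h0 => hne (by ext <;> simp_all)
    simp [zero_pow this]
  · simp

theorem ι_smul_sum_trace_eq_zero {N : ℕ} {A : Fin N → Matrix κ κ R}
    (h : StandardIdentityOnSkew R κ (N + 1)) (hA : ∀ s, (A s)ᵀ = -A s) (u : M) (v : Fin N → M) :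
    ι R u • ∑ p ∈ antidiagonal N, (-1 : ℤ) ^ p.1 • (trace (oddMatrix A v ^ p.1) •
      oddMatrix A v ^ p.2 - (oddMatrix A v ^ p.1)ᵀ * oddMatrix A v ^ p.2) = 0 := by
  ext i j
  have hsum := Finset.sum_eq_zero fun k (_ : k ∈ Finset.univ) => h.ι_mul_sum_eq_zero hA u v k j k i
  rw [← Finset.mul_sum, Finset.sum_comm] at hsum
  simpa only [Matrix.smul_apply, Matrix.sum_apply, Matrix.sub_apply, mul_apply, trace, diag_apply,
    transpose_apply, Finset.sum_mul, smul_eq_mul, ← Finset.smul_sum, Finset.sum_sub_distrib,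
    Matrix.zero_apply] using hsum

theorem four_mul_of_succ [Algebra ℚ R] (hκ : 2 ≤ Fintype.card κ) {m : ℕ}
    (h : StandardIdentityOnSkew R κ (4 * m + 1)) : StandardIdentityOnSkew R κ (4 * m) := by
  intro A hA
  let b := Pi.basisFun R (Fin (4 * m + 1))
  let v (s : Fin (4 * m)) := b s.succ
  have := isAddTorsionFree_of_algebra_rat R (ExteriorAlgebra R (Fin (4 * m + 1) → R))
  refine standardSum_eq_zero_of_mul_oddMatrix_pow (v := v) (b := b) (x := ι R (b 0))
    (ExteriorAlgebra.ιMulti_succ_apply ⇑b).symm fun i j => ?_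
  have ha := isOddSkew_oddMatrix hA v
  have hsum := h.ι_smul_sum_trace_eq_zero hA (b 0) v
  generalize oddMatrix A v = a at ha hsum ⊢
  simp only [smul_sub, Finset.sum_sub_distrib, ha.sum_transpose_pow_mul_pow] at hsum
  rw [sub_eq_zero] at hsum
  have hsumT := congrArg transpose hsum
  rw [transpose_smul, transpose_smul, ha.transpose_pow_four_mul] at hsumT
  -- Adding the relation to its transpose kills every trace term except the one of `a ^ 0`.
  have hdouble : (2 * Fintype.card κ) • (ι R (b 0) • a ^ (4 * m)) =
      2 • (ι R (b 0) • a ^ (4 * m)) := by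
    rw [smul_comm, ← ha.sum_trace_smul_pow_add_transpose m, two_nsmul]
    nth_rw 1 [← hsum]
    rw [← hsumT]
    simp only [smul_add, Finset.sum_add_distrib, transpose_sum, transpose_smul]
  obtain ⟨r, hr⟩ := Nat.exists_eq_add_of_le' hκ
  rw [hr, show 2 * (r + 2) = 2 * (r + 1) + 2 by ring, add_smul, add_eq_right] at hdouble
  exact (nsmul_eq_zero_iff_right (by omega)).mp (congrFun₂ hdouble i j)

end StandardIdentityOnSkew

end Linearization

section KostantRowen

variable {R S κ : Type*} [CommRing R] [CommRing S] [Fintype κ] [DecidableEq κ] {N : ℕ}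

theorem standardIdentityOnSkew [Algebra ℚ R] (hκ : 2 ≤ Fintype.card κ)
    (hN : N = 2 * Fintype.card κ - 2) : StandardIdentityOnSkew R κ N := by
  rcases Nat.even_or_odd' (Fintype.card κ) with ⟨m, hm | hm⟩
  · obtain ⟨k, rfl⟩ := Nat.exists_eq_add_of_le' (show 1 ≤ m by omega)
    rw [hN, ← Nat.mul_sub_one]
    exact standardIdentityOnSkew_of_even_card hm
  · have hunit : Fintype.card (κ ⊕ Unit) = 2 * (m + 1) := by
      rw [Fintype.card_sum, Fintype.card_unit, hm]
      ring
    have hsum : StandardIdentityOnSkew R (κ ⊕ Unit) (4 * m + 1 + 1) := by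
      have := standardIdentityOnSkew_of_even_card (R := R) hunit
      rwa [hunit, show 2 * (2 * (m + 1) - 1) = 4 * m + 1 + 1 by omega] at this
    rw [hN, show 2 * Fintype.card κ - 2 = 4 * m by omega]
    exact hsum.of_sum_unit.four_mul_of_succ hκ

theorem standardSum_map (f : R →+* S) (A : Fin N → Matrix κ κ R) :
    standardSum (fun s => (A s).map f) = (standardSum A).map f := by
  change _ = f.mapMatrix (standardSum A)
  simp only [standardSum, map_sum, map_zsmul, map_list_prod, List.map_ofFn]
  rfl

theorem standardSum_sub_transpose (hκ : 2 ≤ Fintype.card κ)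
    (hN : N = 2 * Fintype.card κ - 2) (U : Fin N → Matrix κ κ R) :
    standardSum (fun s => U s - (U s)ᵀ) = 0 := by
  let generic (S : Type) [CommRing S] (s : Fin N) : Matrix κ κ (MvPolynomial (Fin N × κ × κ) S) :=
    of fun i j => .X (s, i, j) - .X (s, j, i)
  have hrat : standardSum (generic ℚ) = 0 :=
    standardIdentityOnSkew hκ hN _ fun s => Matrix.ext fun i j => (neg_sub _ _).symm
  have hint : standardSum (generic ℤ) = 0 := by
    refine Matrix.map_injective (MvPolynomial.map_injective (Int.castRingHom ℚ)
      Int.cast_injective) ?_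
    dsimp only
    rw [← standardSum_map, Matrix.map_zero _ (map_zero _), ← hrat]
    congr 1
    ext s i j
    simp [generic]
  have hU : (fun s => U s - (U s)ᵀ) = fun s => (generic ℤ s).map
      (MvPolynomial.eval₂Hom (Int.castRingHom R) fun x => U x.1 x.2.1 x.2.2) := by
    ext s i j
    simp [generic]
  rw [hU, standardSum_map, hint, Matrix.map_zero _ (map_zero _)]

theorem exists_eq_sub_transpose {ι : Type*} {A : Matrix ι ι R} (hA : Aᵀ = -A)
    (hdiag : ∀ i, A i i = 0) : ∃ U : Matrix ι ι R, A = U - Uᵀ := by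
  classical
  let _ : LinearOrder ι := linearOrderOfSTO WellOrderingRel
  refine ⟨of fun i j => if i < j then A i j else 0, ?_⟩
  ext i j
  have hij : A j i = -A i j := congrFun₂ hA i j
  rcases lt_trichotomy i j with h | rfl | h
  · simp [h, h.not_gt]
  · simp [hdiag]
  · simp [h, h.not_gt, hij]

theorem kostant_rowen_general (hκ : 2 ≤ Fintype.card κ) (hN : N = 2 * Fintype.card κ - 2)
    (A : Fin N → Matrix κ κ R) (hA : ∀ s, (A s)ᵀ = -A s) (hdiag : ∀ s i, A s i i = 0) :
    ∑ σ : Equiv.Perm (Fin N),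
      (Equiv.Perm.sign σ : ℤ) • (List.ofFn fun t => A (σ t)).prod = 0 := by
  choose U hU using fun s => exists_eq_sub_transpose (hA s) (hdiag s)
  rw [funext hU]
  exact standardSum_sub_transpose hκ hN U

end KostantRowen

theorem kostant_rowen (n : ℕ) (hn : 2 ≤ n)
    (A : Fin (2 * n - 2) → Matrix (Fin n) (Fin n) ℂ)
    (hA : ∀ i, (A i)ᵀ = -A i) :
    ∑ σ : Equiv.Perm (Fin (2 * n - 2)),
      (Equiv.Perm.sign σ : ℤ) • (List.ofFn fun t => A (σ t)).prod = 0 :=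
  kostant_rowen_general (by simpa using hn) (by simp) A hA fun s i =>
    self_eq_neg.mp (congrFun₂ (hA s) i i)
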